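/- arXiv:1812.11213 — 2 statements merged into one kernel-verified Lean document; each statement's English description precedes it below -/
import Mathlib

section
/- Let U be a nonzero proper subspace of V, let l = codim_V U, r = dim(U ∩ U^⊥), and let t = codim_G N_G(U) where G = s(V,b)^{(1)} is the derived subalgebra of s(V,b). Then t = l(n − l) − r(r − 1)/2 − r; equivalently, l + t − n = (l − 1)(n − l) − r(r + 1)/2. -/
open Module

/-- The orthogonal complement of a subspace `L` with respect to a bilinear form `b`:
`L^⊥ = {v ∈ V | b(v,w) = 0 for all w ∈ L}`. -/
def perp {K V : Type*} [Field K] [AddCommGroup V] [Module K V]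
    (B : V →ₗ[K] V →ₗ[K] K) (L : Submodule K V) : Submodule K V where
  carrier := {v | ∀ w ∈ L, B v w = 0}
  add_mem' := by
    intro a b ha hb w hw
    simp [map_add, LinearMap.add_apply, ha w hw, hb w hw]
  zero_mem' := by
    intro w hw
    simp
  smul_mem' := by
    intro c a ha w hw
    simp [map_smul, LinearMap.smul_apply, ha w hw]

/-- The Lie algebra `s(V,b)` of endomorphisms preserving the bilinear form `b`
(in characteristic 2, self-adjoint endomorphisms), as a subspace of `End K V`. -/
def sAdj {K V : Type*} [Field K] [AddCommGroup V] [Module K V]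
    (B : V →ₗ[K] V →ₗ[K] K) : Submodule K (Module.End K V) where
  carrier := {A | ∀ u v : V, B (A u) v = B u (A v)}
  add_mem' := by
    intro A C hA hC u v
    simp [LinearMap.add_apply, map_add, hA u v, hC u v]
  zero_mem' := by
    intro u v
    simp
  smul_mem' := by
    intro c A hA u v
    simp [LinearMap.smul_apply, map_smul, hA u v]

/-- The derived subalgebra `s(V,b)⁽¹⁾ = [s(V,b), s(V,b)]`, spanned by
commutators of elements of `s(V,b)`. -/
def sAdjDerived {K V : Type*} [Field K] [AddCommGroup V] [Module K V]
    (B : V →ₗ[K] V →ₗ[K] K) : Submodule K (Module.End K V) :=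
  Submodule.span K
    {C : Module.End K V | ∃ A₁ ∈ sAdj B, ∃ A₂ ∈ sAdj B, C = A₁ * A₂ - A₂ * A₁}

/-- Endomorphisms of V leaving the subspace U stable. -/
def stab {K V : Type*} [Field K] [AddCommGroup V] [Module K V]
    (U : Submodule K V) : Submodule K (Module.End K V) where
  carrier := {A | ∀ u ∈ U, A u ∈ U}
  add_mem' := by
    intro A C hA hC u hu
    simpa [LinearMap.add_apply] using U.add_mem (hA u hu) (hC u hu)
  zero_mem' := by
    intro u hu
    simp
  smul_mem' := by
    intro c A hA u hu
    simpa [LinearMap.smul_apply] using U.smul_mem c (hA u hu)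

section helpers
variable {K V : Type*} [Field K] [AddCommGroup V] [Module K V]

/-- rank one operator -/
def rk (B : V →ₗ[K] V →ₗ[K] K) (x y : V) : Module.End K V := (B x).smulRight y

lemma rk_apply (B : V →ₗ[K] V →ₗ[K] K) (x y u : V) : rk B x y u = B x u • y := rfl

lemma rk_self_mem (B : V →ₗ[K] V →ₗ[K] K) (hs : ∀ u v : V, B u v = B v u) (x : V) :
    rk B x x ∈ sAdj B := by
  intro u v
  simp only [rk_apply, map_smul, LinearMap.smul_apply, smul_eq_mul]
  rw [hs u x]; ring

lemma derived_rk1 (B : V →ₗ[K] V →ₗ[K] K) (hs : ∀ u v : V, B u v = B v u) (x y : V)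
    (h : B x y ≠ 0) : rk B x y - rk B y x ∈ sAdjDerived B := by
  have h1 : rk B y y * rk B x x - rk B x x * rk B y y ∈ sAdjDerived B :=
    Submodule.subset_span ⟨_, rk_self_mem B hs y, _, rk_self_mem B hs x, rfl⟩
  have h2 := (sAdjDerived B).smul_mem (B x y)⁻¹ h1
  convert h2 using 1
  ext u
  simp only [LinearMap.sub_apply, LinearMap.smul_apply, Module.End.mul_apply, rk_apply, map_smul,
    smul_eq_mul, hs y x, smul_sub, smul_smul]
  congr 2 <;> field_simp

lemma derived_rk (B : V →ₗ[K] V →ₗ[K] K) (hs : ∀ u v : V, B u v = B v u)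
    (hnd : ∀ v : V, (∀ w : V, B v w = 0) → v = 0) (x y : V) :
    rk B x y - rk B y x ∈ sAdjDerived B := by
  by_cases h : B x y = 0
  · by_cases hx : x = 0
    · subst hx
      convert (sAdjDerived B).zero_mem
      ext u; simp [rk_apply]
    · have : ∃ z, B x z ≠ 0 := by
        by_contra! hh
        exact hx (hnd x hh)
      obtain ⟨z, hz⟩ := this
      have h1 := derived_rk1 B hs x z hz
      have h2 := derived_rk1 B hs x (y + z) (by simpa [h] using hz)
      have h3 := (sAdjDerived B).sub_mem h2 h1
      convert h3 using 1
      ext u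
      simp only [LinearMap.sub_apply, rk_apply, map_add, LinearMap.add_apply, add_smul, smul_add]
      abel
  · exact derived_rk1 B hs x y h

lemma derived_alt (B : V →ₗ[K] V →ₗ[K] K) (hs : ∀ u v : V, B u v = B v u)
    {A : Module.End K V} (hA : A ∈ sAdjDerived B) (u : V) : B (A u) u = 0 := by
  induction hA using Submodule.span_induction with
  | mem C hC =>
    obtain ⟨A₁, h1, A₂, h2, rfl⟩ := hC
    simp only [LinearMap.sub_apply, Module.End.mul_apply, map_sub]
    rw [h1, h2, hs, sub_self]
  | zero => simp
  | add x y _ _ hx hy => simp [hx, hy]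
  | smul a x _ hx => simp [hx]

lemma alt_neg (F : V →ₗ[K] V →ₗ[K] K) (hF : ∀ u, F u u = 0) (u v : V) : F u v + F v u = 0 := by
  have := hF (u + v)
  simpa [hF, add_comm] using this

lemma alt_derived [FiniteDimensional K V] (B : V →ₗ[K] V →ₗ[K] K)
    (hs : ∀ u v : V, B u v = B v u)
    (hnd : ∀ v : V, (∀ w : V, B v w = 0) → v = 0)
    (A : Module.End K V) (hA : ∀ u, B (A u) u = 0) : A ∈ sAdjDerived B := by
  have hN : LinearMap.BilinForm.Nondegenerate B := by
    refine ⟨hnd, fun v hv => hnd v fun w => ?_⟩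
    rw [hs]; exact hv w
  let e := Module.finBasis K V
  let f := LinearMap.BilinForm.dualBasis B hN e
  have hf : ∀ i j, B (f i) (e j) = if j = i then 1 else 0 := fun i j =>
    LinearMap.BilinForm.apply_dualBasis_left hN e i j
  have key : A = ∑ p : Fin (finrank K V) × Fin (finrank K V),
      B (A (e p.1)) (e p.2) • rk B (f p.1) (f p.2) := by
    apply e.ext
    intro k
    rw [← sub_eq_zero]
    apply hnd
    intro w
    suffices h : B (A (e k) - (∑ p : Fin (finrank K V) × Fin (finrank K V),
      B (A (e p.1)) (e p.2) • rk B (f p.1) (f p.2)) (e k)) = 0 by rw [h]; rfl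
    apply e.ext
    intro m
    simp [Fintype.sum_prod_type, LinearMap.sum_apply, rk_apply, hf, map_sum]
  have halt := alt_neg (B ∘ₗ A) hA
  rw [← Submodule.Quotient.mk_eq_zero, ← Submodule.mkQ_apply, key, map_sum]
  refine Finset.sum_involution (fun p _ => p.swap) ?_ ?_ (by simp) (by simp)
  · rintro ⟨i, j⟩ -
    have h1 : (sAdjDerived B).mkQ (rk B (f j) (f i)) = (sAdjDerived B).mkQ (rk B (f i) (f j)) := by
      rw [← sub_eq_zero, ← map_sub, Submodule.mkQ_apply, Submodule.Quotient.mk_eq_zero]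
      exact derived_rk B hs hnd _ _
    simp only [Prod.swap, map_smul, h1]
    rw [← add_smul]
    have := halt (e i) (e j)
    simp only [LinearMap.comp_apply] at this
    rw [this, zero_smul]
  · rintro ⟨i, j⟩ - h hij
    apply h
    have : j = i := congrArg Prod.fst hij
    subst this
    simp [hA]

lemma exists_glue {F : Type*} [AddCommGroup F] [Module K F] (U W : Submodule K V)
    (f : U →ₗ[K] F) (g : W →ₗ[K] F)
    (h : ∀ (x : U) (y : W), (x : V) = y → f x = g y) :
    ∃ p : V →ₗ[K] F, (∀ x : U, p x = f x) ∧ ∀ y : W, p y = g y := by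
  let f' : V →ₗ.[K] F := ⟨U, f⟩
  let g' : V →ₗ.[K] F := ⟨W, g⟩
  have h' : ∀ (x : f'.domain) (y : g'.domain), (x : V) = y → f' x = g' y := h
  obtain ⟨p, hp⟩ := LinearMap.exists_extend (f'.sup g' h').toFun
  refine ⟨p, fun x => ?_, fun y => ?_⟩
  · have h1 := (f'.left_le_sup g' h').2 (x := x)
      (y := ⟨x, (f'.left_le_sup g' h').1 x.2⟩) rfl
    have h2 := LinearMap.congr_fun hp ⟨x, (f'.left_le_sup g' h').1 x.2⟩
    exact h2.trans h1.symm
  · have h1 := (f'.right_le_sup g' h').2 (x := y)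
      (y := ⟨y, (f'.right_le_sup g' h').1 y.2⟩) rfl
    have h2 := LinearMap.congr_fun hp ⟨y, (f'.right_le_sup g' h').1 y.2⟩
    exact h2.trans h1.symm

/-- inclusion of the intersection -/
abbrev iU (U W : Submodule K V) : ↥(U ⊓ W) →ₗ[K] U := Submodule.inclusion inf_le_left
/-- inclusion of the intersection -/
abbrev iW (U W : Submodule K V) : ↥(U ⊓ W) →ₗ[K] W := Submodule.inclusion inf_le_right

lemma exists_alt_ext (U W : Submodule K V) (φ : U →ₗ[K] W →ₗ[K] K)
    (h : ∀ x, φ (iU U W x) (iW U W x) = 0) :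
    ∃ ψ : V →ₗ[K] V →ₗ[K] K, (∀ x, ψ x x = 0) ∧ ∀ (x : U) (y : W), ψ x y = φ x y := by
  obtain ⟨π, hπ⟩ := LinearMap.exists_leftInverse_of_injective (U ⊓ W).subtype (by simp)
  have hπ' : ∀ x : ↥(U ⊓ W), π x = x := fun x => LinearMap.congr_fun hπ x
  obtain ⟨p, hp1, hp2⟩ := exists_glue U W LinearMap.id (iU U W ∘ₗ π ∘ₗ W.subtype) (by
    rintro ⟨x, hx⟩ ⟨y, hy⟩ hxy
    obtain rfl : x = y := hxy
    have := hπ' ⟨x, hx, hy⟩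
    simp only at this
    simp only [LinearMap.id_apply, LinearMap.comp_apply, Submodule.subtype_apply, this]
    rfl)
  obtain ⟨q, hq1, hq2⟩ := exists_glue U W (iW U W ∘ₗ π ∘ₗ U.subtype) LinearMap.id (by
    rintro ⟨x, hx⟩ ⟨y, hy⟩ hxy
    obtain rfl : x = y := hxy
    have := hπ' ⟨x, hx, hy⟩
    simp only at this
    simp only [LinearMap.id_apply, LinearMap.comp_apply, Submodule.subtype_apply, this]
    rfl)
  let φR : ↥(U ⊓ W) →ₗ[K] ↥(U ⊓ W) →ₗ[K] K := φ.compl₁₂ (iU U W) (iW U W)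
  refine ⟨φ.compl₁₂ p q - (φ.compl₁₂ p q).flip - φR.compl₁₂ π π, fun x => ?_, fun x y => ?_⟩
  · simp [φR, h]
  · have h2 := alt_neg φR h (π x) (π y)
    simp only [φR, LinearMap.compl₁₂_apply] at h2
    simp only [LinearMap.sub_apply, LinearMap.compl₁₂_apply, LinearMap.flip_apply, hp1, hp2,
      hq1, hq2, LinearMap.comp_apply, LinearMap.id_apply, Submodule.subtype_apply, φR]
    linear_combination -h2

lemma finrank_S [FiniteDimensional K V] (U W : Submodule K V)
    (S : Submodule K (U →ₗ[K] W →ₗ[K] K))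
    (hS : ∀ φ, φ ∈ S ↔ ∀ x, φ (iU U W x) (iW U W x) = 0) :
    finrank K S + (finrank K ↥(U ⊓ W) + 1).choose 2 = finrank K U * finrank K W := by
  let e := Module.finBasis K ↥(U ⊓ W)
  let r := finrank K ↥(U ⊓ W)
  let φf (φ : U →ₗ[K] W →ₗ[K] K) (i j : Fin r) : K := φ (iU U W (e i)) (iW U W (e j))
  let τ : (U →ₗ[K] W →ₗ[K] K) →ₗ[K] ({p : Fin r × Fin r // p.1 ≤ p.2} → K) :=
    { toFun := fun φ p => if p.1.1 = p.1.2 then φf φ p.1.1 p.1.2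
        else φf φ p.1.1 p.1.2 + φf φ p.1.2 p.1.1
      map_add' := by
        intro a b; ext p
        simp only [φf, LinearMap.add_apply, Pi.add_apply]
        split_ifs <;> ring
      map_smul' := by
        intro a b; ext p
        simp only [φf, LinearMap.smul_apply, Pi.smul_apply, smul_eq_mul, RingHom.id_apply]
        split_ifs <;> ring }
  have hτ : ∀ φ p, τ φ p = if p.1.1 = p.1.2 then φf φ p.1.1 p.1.2
        else φf φ p.1.1 p.1.2 + φf φ p.1.2 p.1.1 := fun _ _ => rfl
  have hker : LinearMap.ker τ = S := by
    ext φ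
    rw [hS, LinearMap.mem_ker]
    let φR : ↥(U ⊓ W) →ₗ[K] ↥(U ⊓ W) →ₗ[K] K := φ.compl₁₂ (iU U W) (iW U W)
    constructor
    · intro h0 x
      have hd : ∀ i, φf φ i i = 0 := fun i => by
        have := congrFun h0 ⟨(i, i), le_rfl⟩
        simpa [hτ] using this
      have hlt : ∀ i j, i < j → φf φ i j + φf φ j i = 0 := fun i j hij => by
        have := congrFun h0 ⟨(i, j), hij.le⟩
        simpa [hτ, hij.ne] using this
      have hall : ∀ i j, φf φ i j + φf φ j i = 0 := fun i j => by
        rcases lt_trichotomy i j with hij | hij | hij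
        · exact hlt i j hij
        · subst hij; simp [hd]
        · rw [add_comm]; exact hlt j i hij
      have hx : φR x x = ∑ p : Fin r × Fin r, e.repr x p.1 * e.repr x p.2 * φf φ p.1 p.2 := by
        conv_lhs => rw [← e.sum_repr x]
        simp only [map_sum, LinearMap.sum_apply, map_smul, LinearMap.smul_apply, smul_eq_mul,
          Fintype.sum_prod_type, Finset.mul_sum]
        rw [Finset.sum_comm]
        refine Finset.sum_congr rfl fun i _ => Finset.sum_congr rfl fun j _ => ?_
        simp only [φR, φf, LinearMap.compl₁₂_apply]
        ring
      change φR x x = 0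
      rw [hx]
      refine Finset.sum_involution (fun p _ => p.swap) ?_ ?_ (by simp) (by simp)
      · rintro ⟨i, j⟩ -
        simp only [Prod.swap]
        linear_combination e.repr x i * e.repr x j * hall i j
      · rintro ⟨i, j⟩ - h hij
        apply h
        have : j = i := congrArg Prod.fst hij
        subst this
        simp [hd]
    · intro h
      ext p
      rw [hτ]
      split_ifs with hp
      · rw [← hp]; exact h _
      · exact alt_neg φR h _ _
  have hsurj : Function.Surjective τ := by
    intro c
    let M : ↥(U ⊓ W) →ₗ[K] ↥(U ⊓ W) →ₗ[K] K :=
      Matrix.toLinearMap₂ e e (Matrix.of fun i j => if h : i ≤ j then c ⟨(i, j), h⟩ else 0)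
    have hM : ∀ i j, M (e i) (e j) = if h : i ≤ j then c ⟨(i, j), h⟩ else 0 := fun i j => by
      exact Matrix.toLinearMap₂_apply_basis e e _ i j
    obtain ⟨p, hp⟩ := LinearMap.exists_leftInverse_of_injective (iU U W)
      (by rw [LinearMap.ker_eq_bot]; exact Submodule.inclusion_injective _)
    obtain ⟨q, hq⟩ := LinearMap.exists_leftInverse_of_injective (iW U W)
      (by rw [LinearMap.ker_eq_bot]; exact Submodule.inclusion_injective _)
    refine ⟨M.compl₁₂ p q, ?_⟩
    have hf : ∀ i j, φf (M.compl₁₂ p q) i j = if h : i ≤ j then c ⟨(i, j), h⟩ else 0 := by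
      intro i j
      rw [← hM]
      simp only [φf, LinearMap.compl₁₂_apply]
      congr 1
      · exact congrArg M (LinearMap.congr_fun hp (e i))
      · exact LinearMap.congr_fun hq (e j)
    ext ⟨⟨i, j⟩, hij⟩
    simp only at hij
    rw [hτ]
    simp only [hf, hij, dite_true]
    split_ifs with h1 h2
    · rfl
    · exact absurd (le_antisymm hij h2) h1
    · simp
  have := LinearMap.finrank_range_add_finrank_ker (K := K) (V := U →ₗ[K] W →ₗ[K] K) τ
  rw [LinearMap.range_eq_top.2 hsurj, finrank_top, hker, Module.finrank_fintype_fun_eq_card,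
    ← Fintype.card_congr Sym2.sortEquiv, Sym2.card, Fintype.card_fin,
    Module.finrank_linearMap, Module.finrank_linearMap, Module.finrank_self, mul_one] at this
  rw [add_comm]; exact this

end helpers

/-- for a nonzero proper subspace U of V, with G = s(V,b)⁽¹⁾,
l = codim U, r = dim(U ∩ U^⊥), n = dim V and t = codim of N_G(U) in G,
t = l(n − l) − r(r − 1)/2 − r. -/
theorem statement15 {K V : Type*} [Field K] [AddCommGroup V] [Module K V]
    [FiniteDimensional K V] [CharP K 2] [PerfectField K]
    (B : V →ₗ[K] V →ₗ[K] K)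
    (hsymm : ∀ u v : V, B u v = B v u)
    (hnd : ∀ v : V, (∀ w : V, B v w = 0) → v = 0)
    (hna : ∃ v : V, B v v ≠ 0)
    (U : Submodule K V) (hUbot : U ≠ ⊥) (hUtop : U ≠ ⊤)
    (n l r t : ℕ)
    (hn : n = finrank K V)
    (hl : l = finrank K V - finrank K ↥U)
    (hr : r = finrank K ↥(U ⊓ perp B U))
    (ht : t = finrank K ↥(sAdjDerived B)
            - finrank K ↥(sAdjDerived B ⊓ stab U)) :
    t = l * (n - l) - r * (r - 1) / 2 - r := by
  have hN : LinearMap.BilinForm.Nondegenerate B := by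
    refine ⟨hnd, fun v hv => hnd v fun w => ?_⟩
    rw [hsymm]; exact hv w
  have hrefl : LinearMap.IsRefl B := fun x y h => by rw [hsymm]; exact h
  have hperp : ∀ L : Submodule K V, perp B L = LinearMap.BilinForm.orthogonal B L := by
    intro L
    ext v
    refine forall₂_congr fun w _ => ?_
    rw [hsymm]
  have hpp : perp B (perp B U) = U := by
    rw [hperp, hperp]
    exact LinearMap.BilinForm.orthogonal_orthogonal hN hrefl U
  have hfr : finrank K ↥(perp B U) = finrank K V - finrank K U := by
    rw [hperp]
    exact LinearMap.BilinForm.finrank_orthogonal hN U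
  let W := perp B U
  let ρ : Module.End K V →ₗ[K] (U →ₗ[K] W →ₗ[K] K) :=
    { toFun := fun A => (B ∘ₗ A).compl₁₂ U.subtype W.subtype
      map_add' := by intro a b; ext; simp
      map_smul' := by intro a b; ext; simp }
  have hρ : ∀ A (u : U) (w : W), ρ A u w = B (A u) w := fun _ _ _ => rfl
  let ρG := ρ.domRestrict (sAdjDerived B)
  have hker : LinearMap.ker ρ = stab U := by
    ext A
    rw [LinearMap.mem_ker]
    constructor
    · intro h u hu
      rw [← hpp]
      intro w hw
      have := LinearMap.congr_fun (LinearMap.congr_fun h ⟨u, hu⟩) ⟨w, hw⟩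
      exact this
    · intro h
      ext u w
      rw [hρ, hsymm]
      exact w.2 _ (h u u.2)
  have hkerG : finrank K (LinearMap.ker ρG) = finrank K ↥(sAdjDerived B ⊓ stab U) := by
    have h1 : LinearMap.ker ρG = Submodule.comap (sAdjDerived B).subtype (stab U) := by
      rw [← hker]; rfl
    rw [h1, ← Submodule.map_comap_subtype]
    exact (Submodule.equivMapOfInjective _ (Submodule.injective_subtype _) _).finrank_eq
  have hS := finrank_S U W (LinearMap.range ρG) (by
    intro φ
    constructor
    · rintro ⟨⟨A, hA⟩, rfl⟩ x
      exact derived_alt B hsymm hA x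
    · intro h
      obtain ⟨ψ, h1, h2⟩ := exists_alt_ext U W φ h
      let D := LinearMap.BilinForm.toDual B hN
      let A : Module.End K V := D.symm.toLinearMap ∘ₗ ψ
      have hA : ∀ x y, B (A x) y = ψ x y := fun x y =>
        LinearMap.congr_fun (D.apply_symm_apply (ψ x)) y
      refine ⟨⟨A, alt_derived B hsymm hnd A fun u => by rw [hA, h1]⟩, ?_⟩
      ext x y
      change B (A x) y = _
      rw [hA, h2])
  have hrn := LinearMap.finrank_range_add_finrank_ker (K := K) (V₂ := U →ₗ[K] W →ₗ[K] K) ρG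
  rw [hkerG] at hrn
  have ht' : t = finrank K (LinearMap.range ρG) := by omega
  have hle : finrank K U ≤ finrank K V := Submodule.finrank_le U
  have hU : finrank K U = n - l := by omega
  have hW : finrank K W = l := by rw [hl]; exact hfr
  have hr' : finrank K ↥(U ⊓ W) = r := hr.symm
  rw [hr', hU, hW, ← ht', Nat.choose_succ_succ' r 1, Nat.choose_one_right,
    Nat.choose_two_right, mul_comm (n - l)] at hS
  omega
end

section
/- Let U be a nonzero proper subspace of V, let l = codim_V U and t = codim_{s(V,b)} N_{s(V,b)}(U). Then l + t ≥ n, and equality l + t = n can hold only when l = 1. -/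
open Module

lemma aux_sep {K V : Type*} [Field K] [AddCommGroup V] [Module K V]
    (w a : V) (h : a ∉ Submodule.span K {w}) : ∃ f : V →ₗ[K] K, f w = 0 ∧ f a ≠ 0 := by
  obtain ⟨f, hf, hle⟩ := Submodule.exists_le_ker_of_notMem h
  exact ⟨f, by simpa using hle (Submodule.mem_span_singleton_self w), hf⟩

lemma aux_sep2 {K V : Type*} [Field K] [AddCommGroup V] [Module K V]
    (w a c : V) (h : a ∉ Submodule.span K {w}) (h' : c ∉ Submodule.span K {w}) :
    ∃ f : V →ₗ[K] K, f w = 0 ∧ f a ≠ 0 ∧ f c ≠ 0 := by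
  obtain ⟨f, hf, hfa⟩ := aux_sep w a h
  obtain ⟨g, hg, hgc⟩ := aux_sep w c h'
  by_cases h1 : f c = 0
  · by_cases h2 : g a = 0
    · exact ⟨f + g, by simp [hf, hg], by simpa [h2] using hfa, by simpa [h1] using hgc⟩
    · exact ⟨g, hg, h2, hgc⟩
  · exact ⟨f, hf, hfa, h1⟩

lemma aux_exists {K V : Type*} [Field K] [AddCommGroup V] [Module K V]
    [FiniteDimensional K V] (S W : Submodule K V) (h : finrank K S < finrank K W) :
    ∃ w ∈ W, w ∉ S := by
  by_contra! hc
  exact absurd (Submodule.finrank_mono (show W ≤ S from hc)) (by omega)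

/-- Lemma 3.3(1): for a nonzero proper subspace U of V, with
l = codim U and t = codim of N_{s(V,b)}(U) in s(V,b), we have l + t ≥ n, and
equality l + t = n can hold only when l = 1. -/
theorem statement16 {K V : Type*} [Field K] [AddCommGroup V] [Module K V]
    [FiniteDimensional K V] [CharP K 2] [PerfectField K]
    (B : V →ₗ[K] V →ₗ[K] K)
    (hsymm : ∀ u v : V, B u v = B v u)
    (hnd : ∀ v : V, (∀ w : V, B v w = 0) → v = 0)
    (hna : ∃ v : V, B v v ≠ 0)
    (U : Submodule K V) (hUbot : U ≠ ⊥) (hUtop : U ≠ ⊤)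
    (n l t : ℕ)
    (hn : n = finrank K V)
    (hl : l = finrank K V - finrank K ↥U)
    (ht : t = finrank K ↥(sAdj B) - finrank K ↥(sAdj B ⊓ stab U)) :
    n ≤ l + t ∧ (l + t = n → l = 1) := by
  have hinj : Function.Injective B := by
    rw [← LinearMap.ker_eq_bot, LinearMap.ker_eq_bot']
    intro v hv
    exact hnd v (fun w => by simp [hv])
  let e : V ≃ₗ[K] (Module.Dual K V) :=
    LinearEquiv.ofInjectiveOfFinrankEq B hinj Subspace.dual_finrank_eq.symm
  have hrep : ∀ f : V →ₗ[K] K, ∃ x, B x = f := fun f => ⟨e.symm f, e.apply_symm_apply f⟩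
  let W : Submodule K V := U.dualAnnihilator.comap e.toLinearMap
  have hW : ∀ w ∈ W, ∀ u ∈ U, B u w = 0 := by
    intro w hw u hu
    rw [hsymm]
    exact (Submodule.mem_dualAnnihilator _).1 hw u hu
  have hWr : finrank K W = finrank K U.dualAnnihilator :=
    (e.ofSubmodule' U.dualAnnihilator).finrank_eq
  have hdim := Subspace.finrank_add_finrank_dualAnnihilator_eq U
  have hlt : finrank K U < finrank K V := Submodule.finrank_lt hUtop
  -- the evaluation argument
  have key : ∀ w ∈ W, w ≠ 0 → ∃ M : Submodule K (Module.End K V),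
      sAdj B ⊓ stab U ≤ M ∧ finrank K (sAdj B) = finrank K U + finrank K M ∧
      ∀ A ∈ sAdj B, (∀ u ∈ U, B (A u) w = 0) → A ∈ M := by
    intro w hw hw0
    let Φ : sAdj B →ₗ[K] (U →ₗ[K] K) :=
      { toFun := fun A => (B.flip w) ∘ₗ A.1 ∘ₗ U.subtype
        map_add' := by intro A C; ext u; simp
        map_smul' := by intro c A; ext u; simp }
    have hΦ : ∀ A u, Φ A u = B (A.1 u) w := fun A u => rfl
    have hsurj : Function.Surjective Φ := by
      intro f
      obtain ⟨F, hF⟩ := LinearMap.exists_extend f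
      obtain ⟨x, hx⟩ := hrep F
      obtain ⟨z, hz⟩ : ∃ z, B z w ≠ 0 := by
        by_contra! hc
        exact hw0 (hnd w (fun v => by rw [hsymm]; exact hc v))
      obtain ⟨y, hy⟩ : ∃ y, B y w = 1 := ⟨(B z w)⁻¹ • z, by simp [hz]⟩
      let A : Module.End K V :=
        (B x).smulRight y + (B y).smulRight x - (B y).smulRight (B x w • y)
      have hA : ∀ v, A v = B x v • y + B y v • x - B y v • (B x w • y) := fun v => rfl
      have hAs : A ∈ sAdj B := by
        intro u v
        rw [hA, hA]
        simp only [map_add, map_sub, map_smul, LinearMap.add_apply, LinearMap.sub_apply,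
          LinearMap.smul_apply, smul_eq_mul, hsymm u x, hsymm u y]
        ring
      refine ⟨⟨A, hAs⟩, ?_⟩
      ext u
      rw [hΦ, hAs, hA, hy, hsymm]
      have : F u = f u := by rw [← hF]; rfl
      simp [← this, ← hx]
    refine ⟨(LinearMap.ker Φ).map (sAdj B).subtype, ?_, ?_, ?_⟩
    · rintro A ⟨hA, hs⟩
      refine ⟨⟨A, hA⟩, ?_, rfl⟩
      rw [SetLike.mem_coe, LinearMap.mem_ker]
      ext u
      exact hW w hw _ (hs u u.2)
    · rw [Submodule.finrank_map_subtype_eq]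
      have h1 := LinearMap.finrank_range_add_finrank_ker Φ
      rw [LinearMap.range_eq_top.2 hsurj, finrank_top] at h1
      have h2 : finrank K (U →ₗ[K] K) = finrank K U := Subspace.dual_finrank_eq
      omega
    · intro A hA h
      refine ⟨⟨A, hA⟩, ?_, rfl⟩
      rw [SetLike.mem_coe, LinearMap.mem_ker]
      ext u
      exact h u u.2
  have h1 : n ≤ l + t := by
    obtain ⟨w, hw, hw0⟩ := aux_exists ⊥ W (by rw [finrank_bot]; omega)
    obtain ⟨M, hM, hMr, -⟩ := key w hw (by simpa using hw0)
    have := Submodule.finrank_mono hM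
    omega
  refine ⟨h1, fun heq => ?_⟩
  by_contra hl1
  obtain ⟨u, hu, hu0⟩ := U.exists_mem_ne_zero_of_ne_bot hUbot
  obtain ⟨w, hw, hwu⟩ := aux_exists (K ∙ u) W (by rw [finrank_span_singleton hu0]; omega)
  have hw0 : w ≠ 0 := by rintro rfl; exact hwu (Submodule.zero_mem _)
  have huw : u ∉ Submodule.span K {w} := by
    intro h
    obtain ⟨c, rfl⟩ := Submodule.mem_span_singleton.1 h
    have hc : c ≠ 0 := by rintro rfl; simp at hu0
    exact hwu (Submodule.mem_span_singleton.2 ⟨c⁻¹, by simp [smul_smul, hc]⟩)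
  obtain ⟨w', hw', hww⟩ := aux_exists (K ∙ w) W (by rw [finrank_span_singleton hw0]; omega)
  obtain ⟨M, hM, hMr, hMm⟩ := key w hw hw0
  obtain ⟨g, hgw, hgu, hgw'⟩ := aux_sep2 w u w' huw hww
  obtain ⟨y, rfl⟩ := hrep g
  let P : Module.End K V := (B y).smulRight y
  have hP : ∀ v, P v = B y v • y := fun v => rfl
  have hPs : P ∈ sAdj B := by
    intro a c
    simp only [hP, map_smul, LinearMap.smul_apply, smul_eq_mul, hsymm a y]
    ring
  have hPM : P ∈ M := hMm P hPs (fun a _ => by simp [hP, hgw])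
  have hlt2 : sAdj B ⊓ stab U < M := by
    refine lt_of_le_of_ne hM ?_
    intro h
    rw [← h] at hPM
    have := hW w' hw' _ (hPM.2 u hu)
    simp [hP, hgu, hgw'] at this
  have := Submodule.finrank_lt_finrank_of_lt hlt2
  omega
end
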